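/- arXiv:1408.5214 — 2 statements merged into one kernel-verified Lean document; each statement's English description precedes it below -/
import Mathlib

section
/- Let A be a real m×n matrix, b ∈ ℝᵐ, u ∈ ℝⁿ, τ > 0, and let X = I₁ × ⋯ × Iₙ ⊆ ℝⁿ be a box with each Iᵢ ∈ T₁ ∪ T₂. Define s : ℝᵐ → ℝⁿ componentwise by s(y)ᵢ = [τ·shrink(τ⁻¹uᵢ + (Aᵀy)ᵢ)]_{Iᵢ}⁺. Then for all y, ỹ ∈ ℝᵐ, ⟨Aᵀy − Aᵀỹ, s(y) − s(ỹ)⟩ ≥ τ⁻¹·‖s(y) − s(ỹ)‖₂². -/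
/-!
The inequality holds coordinate by coordinate. The projection onto an interval is firmly
nonexpansive, `(p - q)² ≤ (w - v) (p - q)` (`IsProjR.sq_sub_le`), and `shrink` is monotone and
`1`-Lipschitz (`shrink_sub_mem`), so passing from `w - v = τ (shrink a - shrink b)` to `τ (a - b)`
only increases the right-hand side, `p - q` being zero or of the same sign as `a - b`. Summing over
the coordinates gives the claim, since `τ⁻¹ uᵢ` cancels in `a - b`. Of the intervals, only
order-convexity matters.
-/

noncomputable section

open scoped RealInnerProductSpace

/-- The shrinkage operator `shrink(s) = sign(s) * max (|s| - 1) 0`. -/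
def shrink (s : ℝ) : ℝ := Real.sign s * max (|s| - 1) 0

/-- `IsProjR I w p` : `p` is the projection of `w` onto `I ⊆ ℝ`. -/
def IsProjR (I : Set ℝ) (w p : ℝ) : Prop := p ∈ I ∧ ∀ t ∈ I, |p - w| ≤ |t - w|

/-- Membership in the class `T₁` of intervals. -/
def InT1 (I : Set ℝ) : Prop :=
  (∃ c : ℝ, 0 < c ∧ I = Set.Ici c) ∨
  (∃ c : ℝ, c < 0 ∧ I = Set.Iic c) ∨
  (∃ c d : ℝ, 0 < c ∧ c < d ∧ I = Set.Icc c d) ∨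
  (∃ c d : ℝ, d < c ∧ c < 0 ∧ I = Set.Icc d c)

/-- Membership in the class `T₂` of intervals. -/
def InT2 (I : Set ℝ) : Prop := ∃ c d : ℝ, c < 0 ∧ 0 < d ∧ I = Set.Icc c d

/-- The ℓ²→ℓ² operator norm of a matrix. -/
def opNorm {m n : ℕ} (A : Matrix (Fin m) (Fin n) ℝ) : ℝ :=
  ‖LinearMap.toContinuousLinearMap (Matrix.toEuclideanLin A)‖

theorem ordConnected_of_InT1_or_InT2 {I : Set ℝ} (h : InT1 I ∨ InT2 I) : I.OrdConnected := by
  rcases h with (⟨c, _, rfl⟩ | ⟨c, _, rfl⟩ | ⟨c, d, _, _, rfl⟩ | ⟨c, d, _, _, rfl⟩) |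
    ⟨c, d, _, _, rfl⟩
  · exact Set.ordConnected_Ici
  · exact Set.ordConnected_Iic
  all_goals exact Set.ordConnected_Icc

/-- Closed form of `shrink` without `Real.sign`: `s` minus its projection onto `[-1, 1]`. -/
theorem shrink_eq (s : ℝ) : shrink s = max (s - 1) 0 + min (s + 1) 0 := by
  unfold shrink
  rcases lt_trichotomy s 0 with h | rfl | h
  · rw [Real.sign_of_neg h, abs_of_neg h, max_eq_right (by linarith : s - 1 ≤ 0)]
    rcases le_total (-s - 1) 0 with h1 | h1
    · rw [max_eq_right h1, min_eq_right (by linarith)]; ring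
    · rw [max_eq_left h1, min_eq_left (by linarith)]; ring
  · simp
  · rw [Real.sign_of_pos h, abs_of_pos h, min_eq_right (by linarith : 0 ≤ s + 1)]
    ring

/-- `shrink` is monotone and `1`-Lipschitz. -/
theorem shrink_sub_mem {a b : ℝ} (h : b ≤ a) :
    0 ≤ shrink a - shrink b ∧ shrink a - shrink b ≤ a - b := by
  rw [shrink_eq, shrink_eq]
  constructor <;>
  rcases max_cases (a - 1) 0 with h1 | h1 <;> rcases max_cases (b - 1) 0 with h2 | h2 <;>
  rcases min_cases (a + 1) 0 with h3 | h3 <;> rcases min_cases (b + 1) 0 with h4 | h4 <;>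
  linarith

/-- Variational inequality characterising the projection onto an interval. -/
theorem IsProjR.mul_nonpos {I : Set ℝ} (hI : I.OrdConnected) {w p q : ℝ}
    (hp : IsProjR I w p) (hq : q ∈ I) : (w - p) * (q - p) ≤ 0 := by
  by_contra! hpos
  -- Otherwise `q` and `w` lie strictly on the same side of `p`, and the one nearer to `p`
  -- is a point of `I` strictly closer to `w`.
  rcases pos_and_pos_or_neg_and_neg_of_mul_pos hpos with ⟨h1, h2⟩ | ⟨h1, h2⟩
  · have hm : min q w ∈ I :=
      hI.out hp.1 hq ⟨le_min (by linarith) (by linarith), min_le_left _ _⟩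
    have h := hp.2 _ hm
    rw [abs_of_nonpos (by linarith), abs_of_nonpos (by linarith [min_le_right q w])] at h
    rcases min_cases q w with h3 | h3 <;> linarith
  · have hm : max q w ∈ I :=
      hI.out hq hp.1 ⟨le_max_left _ _, max_le (by linarith) (by linarith)⟩
    have h := hp.2 _ hm
    rw [abs_of_nonneg (by linarith), abs_of_nonneg (by linarith [le_max_right q w])] at h
    rcases max_cases q w with h3 | h3 <;> linarith

/-- Firm nonexpansiveness of the projection onto an interval. -/
theorem IsProjR.sq_sub_le {I : Set ℝ} (hI : I.OrdConnected) {w v p q : ℝ}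
    (hp : IsProjR I w p) (hq : IsProjR I v q) : (p - q) ^ 2 ≤ (w - v) * (p - q) := by
  have h1 := hp.mul_nonpos hI hq.1
  have h2 := hq.mul_nonpos hI hp.1
  linarith

/-- One-coordinate cocoercivity, for ordered arguments. -/
theorem sq_sub_le_of_le {I : Set ℝ} (hI : I.OrdConnected) {τ a b p q : ℝ} (hτ : 0 < τ)
    (hp : IsProjR I (τ * shrink a) p) (hq : IsProjR I (τ * shrink b) q) (hab : b ≤ a) :
    (p - q) ^ 2 ≤ τ * ((a - b) * (p - q)) := by
  have h := hp.sq_sub_le hI hq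
  obtain ⟨h0, h1⟩ := shrink_sub_mem hab
  rw [← mul_sub] at h
  rcases le_or_gt 0 (p - q) with hpq | hpq
  · calc (p - q) ^ 2 ≤ τ * (shrink a - shrink b) * (p - q) := h
      _ ≤ τ * (a - b) * (p - q) := by gcongr
      _ = _ := by ring
  · -- Monotonicity of the composition excludes `p < q`.
    have h2 : τ * (shrink a - shrink b) * (p - q) ≤ 0 :=
      mul_nonpos_of_nonneg_of_nonpos (mul_nonneg hτ.le h0) hpq.le
    have h3 : 0 < (p - q) ^ 2 := sq_pos_of_neg hpq
    linarith

theorem inv_mul_sq_sub_le {I : Set ℝ} (hI : I.OrdConnected) {τ a b p q : ℝ} (hτ : 0 < τ)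
    (hp : IsProjR I (τ * shrink a) p) (hq : IsProjR I (τ * shrink b) q) :
    τ⁻¹ * (p - q) ^ 2 ≤ (a - b) * (p - q) := by
  rw [inv_mul_le_iff₀ hτ]
  rcases le_total b a with hab | hab
  · exact sq_sub_le_of_le hI hτ hp hq hab
  · linarith [sq_sub_le_of_le hI hτ hq hp hab]

/-- cocoercivity-type inequality
`⟨Aᵀy − Aᵀỹ, s(y) − s(ỹ)⟩ ≥ τ⁻¹‖s(y) − s(ỹ)‖²` for the projected shrinkage map. -/
theorem proshrink_cocoercive {m n : ℕ} (A : Matrix (Fin m) (Fin n) ℝ)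
    (b : EuclideanSpace ℝ (Fin m)) (u : EuclideanSpace ℝ (Fin n))
    (τ : ℝ) (hτ : 0 < τ)
    (I : Fin n → Set ℝ) (hI : ∀ i, InT1 (I i) ∨ InT2 (I i))
    (X : Set (EuclideanSpace ℝ (Fin n))) (hX : X = {x | ∀ i, x i ∈ I i})
    (S : EuclideanSpace ℝ (Fin m) → EuclideanSpace ℝ (Fin n))
    (hS : ∀ y i, IsProjR (I i)
      (τ * shrink (τ⁻¹ * u i + Matrix.toEuclideanLin A.transpose y i)) (S y i))
    (y ytil : EuclideanSpace ℝ (Fin m)) :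
    τ⁻¹ * ‖S y - S ytil‖ ^ 2 ≤
      ⟪Matrix.toEuclideanLin A.transpose y - Matrix.toEuclideanLin A.transpose ytil,
        S y - S ytil⟫ := by
  rw [EuclideanSpace.norm_sq_eq, PiLp.inner_apply, Finset.mul_sum]
  refine Finset.sum_le_sum fun i _ => ?_
  have h := inv_mul_sq_sub_le (ordConnected_of_InT1_or_InT2 (hI i)) hτ (hS y i) (hS ytil i)
  rw [add_sub_add_left_eq_sub] at h
  simpa [mul_comm] using h
end
end

section
/- Let A be a nonzero real m×n matrix, b ∈ ℝᵐ, u ∈ ℝⁿ, τ > 0, and let X = I₁ × ⋯ × Iₙ ⊆ ℝⁿ be a box with each Iᵢ ∈ T₁ ∪ T₂; assume X ∩ {x : Ax = b} ≠ ∅ and let x* be the unique minimizer of x ↦ ‖x‖₁ + (1/(2τ))‖x − u‖₂² over X ∩ {x : Ax = b}. Define s : ℝᵐ → ℝⁿ componentwise by s(y)ᵢ = [τ·shrink(τ⁻¹uᵢ + (Aᵀy)ᵢ)]_{Iᵢ}⁺, and assume there exists ŷ ∈ ℝᵐ with A·s(ŷ) = b. Let 0 < h < 2/(τ‖A‖²),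 where ‖A‖ is the ℓ²→ℓ² operator norm, and define sequences by y⁰ = 0, x^{k+1} = s(y^k), y^{k+1} = y^k + h(b − A x^{k+1}). Then the primal sequence converges: x^k → x* as k → ∞. -/
/-!
The iteration is gradient ascent on the dual of the strongly convex primal problem. Coordinatewise,
the projected shrinkage `p = [τ shrink v]_I⁺` satisfies the variational inequality
`(v - p / τ) (t - p) ≤ |t| - |p|` for `t ∈ I`, i.e. it minimizes `|t| + t² / (2τ) - v t` over `I`
(`IsProjR.variational`). Two consequences follow.

* If `A (S ŷ) = b`, then `S ŷ` is a primal solution, and strong convexity gives `S ŷ = x*`.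
* The map `S` satisfies `‖S y - S y'‖² ≤ τ ⟪y - y', A (S y - S y')⟫` (`sq_norm_sub_le`), so
  `‖y^{k+1} - ŷ‖² ≤ ‖y^k - ŷ‖² - h (2 / τ - h ‖A‖²) ‖x^{k+1} - x*‖²`.

For `0 < h < 2 / (τ ‖A‖²)` the factor in front of `‖x^{k+1} - x*‖²` is positive, so
`∑ ‖x^{k+1} - x*‖²` is finite by telescoping (`tendsto_zero_of_descent`), and `x^k → x*`.
-/

noncomputable section

open scoped RealInnerProductSpace

/-- With `q = τ shrink v`, the number `g = v - q / τ` is a subgradient of `|·|` at `q`. -/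
lemma shrink_subgradient {τ : ℝ} (hτ : 0 < τ) (v : ℝ) :
    |v - τ * shrink v / τ| ≤ 1 ∧ (0 < τ * shrink v → v - τ * shrink v / τ = 1) ∧
      (τ * shrink v < 0 → v - τ * shrink v / τ = -1) := by
  rw [mul_div_cancel_left₀ _ hτ.ne']
  rcases lt_trichotomy v 0 with hv | rfl | hv
  · have hs : shrink v = -max (-v - 1) 0 := by
      simp [shrink, Real.sign_of_neg hv, abs_of_neg hv]
    rcases le_total (-v - 1) 0 with h1 | h1
    · rw [max_eq_right h1] at hs
      simp only [hs, abs_le]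
      refine ⟨⟨by linarith, by linarith⟩, fun h => ?_, fun h => ?_⟩ <;> simp at h
    · rw [max_eq_left h1] at hs
      simp only [hs, abs_le]
      refine ⟨⟨by linarith, by linarith⟩, fun h => ?_, fun h => by ring⟩
      nlinarith
  · simp [shrink]
  · have hs : shrink v = max (v - 1) 0 := by
      simp [shrink, Real.sign_of_pos hv, abs_of_pos hv]
    rcases le_total (v - 1) 0 with h1 | h1
    · rw [max_eq_right h1] at hs
      simp only [hs, abs_le]
      refine ⟨⟨by linarith, by linarith⟩, fun h => ?_, fun h => ?_⟩ <;> simp at h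
    · rw [max_eq_left h1] at hs
      simp only [hs, abs_le]
      refine ⟨⟨by linarith, by linarith⟩, fun h => by ring, fun h => ?_⟩
      nlinarith

lemma ordConnected_of_InT {I : Set ℝ} (hI : InT1 I ∨ InT2 I) : I.OrdConnected := by
  rcases hI with (⟨c, _, rfl⟩ | ⟨c, _, rfl⟩ | ⟨c, d, _, _, rfl⟩ | ⟨c, d, _, _, rfl⟩) |
    ⟨c, d, _, _, rfl⟩ <;> infer_instance

lemma IsProjR.le_of_lt {I : Set ℝ} (hI : I.OrdConnected) {q p t : ℝ} (hp : IsProjR I q p)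
    (hqp : q < p) (ht : t ∈ I) : p ≤ t := by
  by_contra! htp
  rcases le_total q t with h | h
  · have := hp.2 t ht
    rw [abs_of_pos (by linarith), abs_of_nonneg (by linarith)] at this
    linarith
  · have := hp.2 q (hI.out ht hp.1 ⟨h, hqp.le⟩)
    rw [abs_of_pos (by linarith), sub_self, abs_zero] at this
    linarith

lemma IsProjR.ge_of_gt {I : Set ℝ} (hI : I.OrdConnected) {q p t : ℝ} (hp : IsProjR I q p)
    (hpq : p < q) (ht : t ∈ I) : t ≤ p := by
  by_contra! htp
  rcases le_total t q with h | h
  · have := hp.2 t ht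
    rw [abs_of_neg (by linarith), abs_of_nonpos (by linarith)] at this
    linarith
  · have := hp.2 q (hI.out hp.1 ht ⟨hpq.le, h⟩)
    rw [abs_of_neg (by linarith), sub_self, abs_zero] at this
    linarith

/-- The projected shrinkage satisfies the optimality condition of the minimization of
`|t| + t² / (2τ) - v t` over the interval `I`. -/
lemma IsProjR.variational {I : Set ℝ} (hI : I.OrdConnected) {τ v p t : ℝ} (hτ : 0 < τ)
    (hp : IsProjR I (τ * shrink v) p) (ht : t ∈ I) :
    (v - p / τ) * (t - p) ≤ |t| - |p| := by
  obtain ⟨hg, hpos, hneg⟩ := shrink_subgradient hτ v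
  generalize τ * shrink v = q at *
  rw [abs_le] at hg
  obtain ⟨hg1, hg2⟩ := hg
  rcases lt_trichotomy q p with hqp | rfl | hqp
  · have htp := hp.le_of_lt hI hqp ht
    have hdiv : q / τ < p / τ := by gcongr
    rcases le_or_gt 0 q with hq | hq
    · rw [abs_of_nonneg (by linarith : 0 ≤ t), abs_of_nonneg (by linarith : 0 ≤ p)]
      nlinarith
    · have := hneg hq
      have h3 : |p| ≤ |t| + (t - p) := by
        have := abs_sub_abs_le_abs_sub p t
        rw [abs_sub_comm, abs_of_nonneg (by linarith : 0 ≤ t - p)] at this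
        linarith
      nlinarith
  · rcases lt_trichotomy q 0 with hq | rfl | hq
    · rw [hneg hq, abs_of_neg hq]
      linarith [neg_abs_le t]
    · have : (v - 0 / τ) * t ≤ 1 * |t| :=
        (le_abs_self _).trans (by rw [abs_mul]; gcongr; exact abs_le.2 ⟨hg1, hg2⟩)
      simpa using this
    · rw [hpos hq, abs_of_pos hq]
      linarith [le_abs_self t]
  · have htp := hp.ge_of_gt hI hqp ht
    have hdiv : p / τ < q / τ := by gcongr
    rcases le_or_gt q 0 with hq | hq
    · rw [abs_of_nonpos (by linarith : t ≤ 0), abs_of_nonpos (by linarith : p ≤ 0)]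
      nlinarith
    · have := hpos hq
      have h3 : |p| ≤ |t| + (p - t) := by
        have := abs_sub_abs_le_abs_sub p t
        rw [abs_of_nonneg (by linarith : 0 ≤ p - t)] at this
        linarith
      nlinarith

lemma inner_toEuclideanLin_transpose {m n : ℕ} (A : Matrix (Fin m) (Fin n) ℝ)
    (y : EuclideanSpace ℝ (Fin m)) (x : EuclideanSpace ℝ (Fin n)) :
    ∑ i, Matrix.toEuclideanLin A.transpose y i * x i = ⟪y, Matrix.toEuclideanLin A x⟫ := by
  have h := Matrix.toEuclideanLin_conjTranspose_eq_adjoint A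
  rw [Matrix.conjTranspose_eq_transpose_of_trivial] at h
  rw [← LinearMap.adjoint_inner_left, ← h, PiLp.inner_apply]
  simp [mul_comm]

/-- Cocoercivity of the dual gradient map. -/
lemma sq_norm_sub_le {m n : ℕ} {A : Matrix (Fin m) (Fin n) ℝ} {u : EuclideanSpace ℝ (Fin n)}
    {τ : ℝ} (hτ : 0 < τ) {I : Fin n → Set ℝ} (hI : ∀ i, (I i).OrdConnected)
    {S : EuclideanSpace ℝ (Fin m) → EuclideanSpace ℝ (Fin n)}
    (hS : ∀ y i, IsProjR (I i)
      (τ * shrink (τ⁻¹ * u i + Matrix.toEuclideanLin A.transpose y i)) (S y i))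
    (y y' : EuclideanSpace ℝ (Fin m)) :
    ‖S y - S y'‖ ^ 2 ≤ τ * ⟪y - y', Matrix.toEuclideanLin A (S y - S y')⟫ := by
  rw [← inner_toEuclideanLin_transpose, EuclideanSpace.norm_sq_eq, Finset.mul_sum]
  refine Finset.sum_le_sum fun i _ => ?_
  have h1 := (hS y i).variational (hI i) hτ (hS y' i).1
  have h2 := (hS y' i).variational (hI i) hτ (hS y i).1
  simp only [map_sub, PiLp.sub_apply, Real.norm_eq_abs, sq_abs]
  generalize Matrix.toEuclideanLin A.transpose y i = w at *
  generalize Matrix.toEuclideanLin A.transpose y' i = w' at *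
  have h3 : (S y i - S y' i) ^ 2 / τ ≤ (w - w') * (S y i - S y' i) := by
    have e : (S y i - S y' i) ^ 2 / τ = (S y i / τ - S y' i / τ) * (S y i - S y' i) := by ring
    rw [e]
    linarith
  rwa [div_le_iff₀' hτ] at h3

/-- A point of the form `S ŷ` that satisfies the linear constraint minimizes the objective, and
strong convexity identifies it with any other minimizer. -/
lemma eq_of_dual_solution {m n : ℕ} {A : Matrix (Fin m) (Fin n) ℝ}
    {b : EuclideanSpace ℝ (Fin m)} {u : EuclideanSpace ℝ (Fin n)}
    {τ : ℝ} (hτ : 0 < τ) {I : Fin n → Set ℝ} (hI : ∀ i, (I i).OrdConnected)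
    {xs z : EuclideanSpace ℝ (Fin n)} {yhat : EuclideanSpace ℝ (Fin m)}
    (hxs : ∀ i, xs i ∈ I i) (hxsb : Matrix.toEuclideanLin A xs = b)
    (hz : ∀ i, IsProjR (I i)
      (τ * shrink (τ⁻¹ * u i + Matrix.toEuclideanLin A.transpose yhat i)) (z i))
    (hzb : Matrix.toEuclideanLin A z = b)
    (hmin : (∑ i, |xs i|) + (1 / (2 * τ)) * ‖xs - u‖ ^ 2 ≤
        (∑ i, |z i|) + (1 / (2 * τ)) * ‖z - u‖ ^ 2) : z = xs := by
  have horth : ∑ i, Matrix.toEuclideanLin A.transpose yhat i * (xs - z) i = 0 := by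
    rw [inner_toEuclideanLin_transpose, map_sub, hxsb, hzb, sub_self, inner_zero_right]
  have hkey : ∑ i, (Matrix.toEuclideanLin A.transpose yhat i * (xs - z) i
      + (1 / (2 * τ)) * (‖(xs - z) i‖ ^ 2 - ‖(xs - u) i‖ ^ 2 + ‖(z - u) i‖ ^ 2))
      ≤ ∑ i, (|xs i| - |z i|) := by
    refine Finset.sum_le_sum fun i _ => le_trans (le_of_eq ?_)
      ((hz i).variational (hI i) hτ (hxs i))
    simp only [PiLp.sub_apply, Real.norm_eq_abs, sq_abs]
    field_simp
    ring
  simp only [Finset.sum_add_distrib, Finset.sum_sub_distrib, ← Finset.mul_sum, horth,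
    ← EuclideanSpace.norm_sq_eq] at hkey
  have h0 : 1 / (2 * τ) * ‖xs - z‖ ^ 2 ≤ 0 := by linarith
  have h1 : ‖xs - z‖ ^ 2 ≤ 0 := nonpos_of_mul_nonpos_right h0 (by positivity)
  have h2 : ‖xs - z‖ = 0 := pow_eq_zero_iff two_ne_zero |>.1 (le_antisymm h1 (sq_nonneg _))
  exact (sub_eq_zero.1 (norm_eq_zero.1 h2)).symm

lemma tendsto_zero_of_descent {a e : ℕ → ℝ} {c : ℝ} (hc : 0 < c) (ha : ∀ k, 0 ≤ a k)
    (he : ∀ k, 0 ≤ e k) (hstep : ∀ k, a (k + 1) ≤ a k - c * e k) :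
    Filter.Tendsto e Filter.atTop (nhds 0) := by
  have hsum : ∀ N, c * ∑ k ∈ Finset.range N, e k ≤ a 0 - a N := by
    intro N
    induction N with
    | zero => simp
    | succ N ih =>
      rw [Finset.sum_range_succ, mul_add]
      linarith [hstep N]
  refine (summable_of_sum_range_le (c := a 0 / c) he fun N => ?_).tendsto_atTop_zero
  rw [le_div_iff₀' hc]
  linarith [hsum N, ha N]

/-- convergence of the primal sequence of the ProShrink algorithm:
`x^k → x*`. -/
theorem proshrink_primal_convergence {m n : ℕ} (A : Matrix (Fin m) (Fin n) ℝ)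
    (hA : A ≠ 0)
    (b : EuclideanSpace ℝ (Fin m)) (u : EuclideanSpace ℝ (Fin n))
    (τ : ℝ) (hτ : 0 < τ)
    (I : Fin n → Set ℝ) (hI : ∀ i, InT1 (I i) ∨ InT2 (I i))
    (X : Set (EuclideanSpace ℝ (Fin n))) (hX : X = {x | ∀ i, x i ∈ I i})
    (hfeas : ∃ x ∈ X, Matrix.toEuclideanLin A x = b)
    (xs : EuclideanSpace ℝ (Fin n)) (hxsX : xs ∈ X)
    (hxsb : Matrix.toEuclideanLin A xs = b)
    (hxsmin : ∀ x ∈ X, Matrix.toEuclideanLin A x = b →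
      (∑ i, |xs i|) + (1 / (2 * τ)) * ‖xs - u‖ ^ 2 ≤
        (∑ i, |x i|) + (1 / (2 * τ)) * ‖x - u‖ ^ 2)
    (S : EuclideanSpace ℝ (Fin m) → EuclideanSpace ℝ (Fin n))
    (hS : ∀ y i, IsProjR (I i)
      (τ * shrink (τ⁻¹ * u i + Matrix.toEuclideanLin A.transpose y i)) (S y i))
    (hdual : ∃ yhat : EuclideanSpace ℝ (Fin m), Matrix.toEuclideanLin A (S yhat) = b)
    (h : ℝ) (hh0 : 0 < h) (hh1 : h < 2 / (τ * opNorm A ^ 2))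
    (x : ℕ → EuclideanSpace ℝ (Fin n)) (y : ℕ → EuclideanSpace ℝ (Fin m))
    (hy0 : y 0 = 0)
    (hxk : ∀ k : ℕ, x (k + 1) = S (y k))
    (hyk : ∀ k : ℕ, y (k + 1) = y k + h • (b - Matrix.toEuclideanLin A (x (k + 1)))) :
    Filter.Tendsto x Filter.atTop (nhds xs) := by
  subst hX
  have hI' : ∀ i, (I i).OrdConnected := fun i => ordConnected_of_InT (hI i)
  obtain ⟨yhat, hyhat⟩ := hdual
  have hz : S yhat = xs := eq_of_dual_solution hτ hI' hxsX hxsb (hS yhat) hyhat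
    (hxsmin _ (fun i => (hS yhat i).1) hyhat)
  set N := opNorm A with hN
  -- For `N = 0` the bound on `h` would read `h < 2 / 0 = 0`.
  have hN2 : 0 < τ * N ^ 2 := by
    rcases (by positivity : 0 ≤ τ * N ^ 2).lt_or_eq with h' | h'
    · exact h'
    · rw [← h', div_zero] at hh1
      linarith
  have hc : 0 < h * (2 / τ - h * N ^ 2) := by
    rw [lt_div_iff₀ hN2] at hh1
    have : h * N ^ 2 < 2 / τ := by
      rw [lt_div_iff₀ hτ]
      linarith
    exact mul_pos hh0 (by linarith)
  have hstep : ∀ k, ‖y (k + 1) - yhat‖ ^ 2 ≤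
      ‖y k - yhat‖ ^ 2 - h * (2 / τ - h * N ^ 2) * ‖x (k + 1) - xs‖ ^ 2 := by
    intro k
    set r := Matrix.toEuclideanLin A (x (k + 1) - xs) with hr
    have hy : y (k + 1) - yhat = (y k - yhat) - h • r := by
      rw [hyk, hr, map_sub, hxsb, smul_sub, smul_sub]
      abel
    have hco : ‖x (k + 1) - xs‖ ^ 2 / τ ≤ ⟪y k - yhat, r⟫ := by
      rw [div_le_iff₀' hτ, hr, hxk, ← hz]
      exact sq_norm_sub_le hτ hI' hS _ _
    have hop : ‖r‖ ^ 2 ≤ N ^ 2 * ‖x (k + 1) - xs‖ ^ 2 := by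
      rw [← mul_pow]
      gcongr
      exact (LinearMap.toContinuousLinearMap (Matrix.toEuclideanLin A)).le_opNorm _
    rw [hy, norm_sub_sq_real, norm_smul, mul_pow, inner_smul_right, Real.norm_eq_abs, sq_abs]
    have h1 := mul_le_mul_of_nonneg_left hco hh0.le
    have h2 := mul_le_mul_of_nonneg_left hop (sq_nonneg h)
    have e : h * (2 / τ - h * N ^ 2) * ‖x (k + 1) - xs‖ ^ 2 =
      2 * (h * (‖x (k + 1) - xs‖ ^ 2 / τ)) - h ^ 2 * (N ^ 2 * ‖x (k + 1) - xs‖ ^ 2) := by ring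
    rw [e]
    linarith
  have hlim : Filter.Tendsto (fun k => ‖x (k + 1) - xs‖ ^ 2) Filter.atTop (nhds 0) :=
    tendsto_zero_of_descent (a := fun k => ‖y k - yhat‖ ^ 2) hc (fun _ => sq_nonneg _)
      (fun _ => sq_nonneg _) hstep
  rw [← Filter.tendsto_add_atTop_iff_nat 1, tendsto_iff_norm_sub_tendsto_zero]
  simpa [Real.sqrt_sq] using hlim.sqrt
end
end
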